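/- Let η be a nonnegative atomless integrable random variable on a probability space (Ω, 𝓕, P), and let μ be a Borel probability measure on [0, ∞) with finite first moment such that c := ∫₀¹ q_η(1−p) · q_μ(p) dp < ∞. If X is a nonnegative random variable with law μ and E[η·X] = c, then X = q_μ(1 − F_η(η)) almost surely; that is, the cost-efficient payoff is unique. -/

import Mathlib

open MeasureTheory Set

/-- The quantile function of a Borel measure `μ` on `ℝ`:
`q_μ(p) = inf {x | p ≤ μ((-∞, x])}`. -/
noncomputable def quantile (μ : Measure ℝ) (p : ℝ) : ℝ :=
  sInf {x : ℝ | p ≤ (μ (Iic x)).toReal}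

/-!
Write `Z = q_μ(1 - F_η(η))`. Since `F_η` is continuous, `F_η(η)` is uniform on `(0, 1)`, so `Z` has
law `μ` and `E[η Z] = c`. By the layer cake formula `E[η X] = ∫₀^∞ E[η; X > t] dt`, and likewise for
`Z`. The events `{X > t}` and `{Z > t}` have the same probability, and `{Z > t}` collects the
smallest values of `η`; hence `E[η; Z > t] ≤ E[η; X > t]`, with equality only if the two events
agree almost surely. As `E[η X] = E[η Z] < ∞`, there is equality for almost every `t`, so almost all
superlevel sets of `X` and `Z` agree, and therefore `X = Z`.
-/

open ProbabilityTheory Filter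
open scoped ENNReal Topology

section Exchange

variable {Ω : Type*} [MeasurableSpace Ω] {P : Measure Ω} {f : Ω → ℝ≥0∞}

lemma setLIntegral_lt_setLIntegral_of_measure_eq {s t : Set Ω} (hs : NullMeasurableSet s P)
    (hst : P s = P t) (hs_zero : P s ≠ 0) (hs_top : P s ≠ ∞)
    (hf : AEMeasurable f (P.restrict t)) (hint : ∫⁻ x in s, f x ∂P ≠ ∞)
    (hlt : ∀ᵐ x ∂P, x ∈ s → ∀ᵐ y ∂P, y ∈ t → f x < f y) :
    ∫⁻ x in s, f x ∂P < ∫⁻ x in t, f x ∂P := by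
  by_contra! hle
  -- Some point of `s` lies above the mean of `f` on `s`, some point of `t` below the mean on `t`.
  obtain ⟨x, ⟨hxs, hmean_le⟩, hx⟩ :=
    ((frequently_ae_iff.2 (measure_setLAverage_le_pos hs_zero hs hint).ne').and_eventually
      hlt).exists
  obtain ⟨y, ⟨hyt, hle_mean⟩, hy⟩ :=
    ((frequently_ae_iff.2 (measure_le_setLAverage_pos (hst ▸ hs_zero) (hst ▸ hs_top)
      hf).ne').and_eventually (hx hxs)).exists
  have hyx : f y ≤ f x := calc
    f y ≤ ⨍⁻ z in t, f z ∂P := hle_mean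
    _ ≤ ⨍⁻ z in s, f z ∂P := by
      rw [setLAverage_eq, setLAverage_eq, hst]
      exact ENNReal.div_le_div_right hle _
    _ ≤ f x := hmean_le
  exact hyx.not_gt (hy hyt)

lemma ae_eq_or_setLIntegral_lt_of_measure_eq {A B : Set Ω} (hA : NullMeasurableSet A P)
    (hB : NullMeasurableSet B P) (hAB : P A = P B) (hB_top : P B ≠ ∞)
    (hf : AEMeasurable f P) (hint : ∫⁻ x in B, f x ∂P ≠ ∞)
    (hlt : ∀ᵐ x ∂P, x ∈ B → ∀ᵐ y ∂P, y ∉ B → f x < f y) :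
    A =ᵐ[P] B ∨ ∫⁻ x in B, f x ∂P < ∫⁻ x in A, f x ∂P := by
  by_cases hnull : P (B \ A) = 0
  · exact .inl (ae_eq_of_ae_subset_of_measure_ge (ae_le_set.2 hnull) hAB.le hB
      (hAB ▸ hB_top)).symm
  right
  have hdiff : P (B \ A) = P (A \ B) :=
    measure_sdiff_symm hB hA hAB.symm (measure_ne_top_of_subset inter_subset_left hB_top)
  have hlt_diff : ∫⁻ x in B \ A, f x ∂P < ∫⁻ x in A \ B, f x ∂P := by
    refine setLIntegral_lt_setLIntegral_of_measure_eq (hB.diff hA) hdiff hnull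
      (measure_ne_top_of_subset sdiff_subset hB_top) hf.restrict
      (ne_top_of_le_ne_top hint (lintegral_mono_set sdiff_subset)) ?_
    filter_upwards [hlt] with x hx hxB
    filter_upwards [hx hxB.1] with y hy hyA using hy hyA.2
  have hinter : ∫⁻ x in B ∩ A, f x ∂P ≠ ∞ :=
    ne_top_of_le_ne_top hint (lintegral_mono_set inter_subset_left)
  calc ∫⁻ x in B, f x ∂P = ∫⁻ x in B ∩ A, f x ∂P + ∫⁻ x in B \ A, f x ∂P := by
        rw [← lintegral_add_measure, Measure.restrict_inter_add_sdiff₀ B hA]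
    _ < ∫⁻ x in B ∩ A, f x ∂P + ∫⁻ x in A \ B, f x ∂P := ENNReal.add_lt_add_left hinter hlt_diff
    _ = ∫⁻ x in A, f x ∂P := by
        rw [inter_comm, ← lintegral_add_measure, Measure.restrict_inter_add_sdiff₀ A hB]

end Exchange

section Superlevel

variable {Ω : Type*} [MeasurableSpace Ω] {P : Measure Ω}

lemma lintegral_mul_ofReal_eq_lintegral_setLIntegral [SFinite P] {f : Ω → ℝ≥0∞}
    (hf : AEMeasurable f P) {X : Ω → ℝ} (hX : AEMeasurable X P) (hX0 : 0 ≤ᵐ[P] X) :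
    ∫⁻ ω, f ω * ENNReal.ofReal (X ω) ∂P = ∫⁻ t in Ioi (0 : ℝ), ∫⁻ ω in {ω | t < X ω}, f ω ∂P := by
  have hac : P.withDensity f ≪ P := withDensity_absolutelyContinuous P f
  calc ∫⁻ ω, f ω * ENNReal.ofReal (X ω) ∂P = ∫⁻ ω, ENNReal.ofReal (X ω) ∂P.withDensity f :=
        (lintegral_withDensity_eq_lintegral_mul₀ hf hX.ennreal_ofReal).symm
    _ = ∫⁻ t in Ioi (0 : ℝ), P.withDensity f {ω | t < X ω} :=
        lintegral_eq_lintegral_meas_lt _ (hac.ae_le hX0) (hX.mono_ac hac)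
    _ = ∫⁻ t in Ioi (0 : ℝ), ∫⁻ ω in {ω | t < X ω}, f ω ∂P := by
        simp only [withDensity_apply']

lemma ae_eq_of_dense_superlevel_ae_eq {α : Type*} [LinearOrder α] [TopologicalSpace α]
    [OrderTopology α] [DenselyOrdered α] [SecondCountableTopology α] {X Z : Ω → α} {D : Set α}
    (hD : Dense D) (h : ∀ t ∈ D, {ω | t < X ω} =ᵐ[P] {ω | t < Z ω}) : X =ᵐ[P] Z := by
  obtain ⟨C, hCD, hC_countable, hC⟩ := hD.exists_countable_dense_subset
  filter_upwards [(ae_ball_iff hC_countable).2 fun t ht => h t (hCD ht)] with ω hω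
  have hiff : ∀ t ∈ C, t < X ω ↔ t < Z ω := fun t ht => iff_of_eq (hω t ht)
  rcases lt_trichotomy (X ω) (Z ω) with hlt | heq | hlt
  · obtain ⟨t, ht, hXt, htZ⟩ := hC.exists_between hlt
    exact absurd ((hiff t ht).2 htZ) hXt.not_gt
  · exact heq
  · obtain ⟨t, ht, hZt, htX⟩ := hC.exists_between hlt
    exact absurd ((hiff t ht).1 htX) hZt.not_gt

lemma ae_eq_of_ae_superlevel_ae_eq {X Z : Ω → ℝ} (hX0 : 0 ≤ᵐ[P] X) (hZ0 : 0 ≤ᵐ[P] Z)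
    (h : ∀ᵐ t ∂volume.restrict (Ioi (0 : ℝ)), {ω | t < X ω} =ᵐ[P] {ω | t < Z ω}) :
    X =ᵐ[P] Z := by
  have hall : ∀ᵐ t : ℝ, {ω | t < X ω} =ᵐ[P] {ω | t < Z ω} := by
    filter_upwards [(ae_restrict_iff' measurableSet_Ioi).1 h, Measure.ae_ne volume 0] with t ht ht0
    rcases ht0.lt_or_gt with hneg | hpos
    · filter_upwards [hX0, hZ0] with ω hXω hZω
      exact propext (iff_of_true (hneg.trans_le hXω) (hneg.trans_le hZω))
    · exact ht hpos
  exact ae_eq_of_dense_superlevel_ae_eq (Measure.dense_of_ae hall) fun t ht => ht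

theorem ae_eq_of_identDistrib_of_lintegral_mul_le [IsFiniteMeasure P] {f : Ω → ℝ≥0∞}
    (hf : AEMeasurable f P) {X Z : Ω → ℝ} (hXZ : IdentDistrib X Z P P) (hX0 : 0 ≤ᵐ[P] X)
    (hanti : ∀ᵐ x ∂P, ∀ᵐ y ∂P, Z y < Z x → f x < f y)
    (hfin : ∫⁻ ω, f ω * ENNReal.ofReal (Z ω) ∂P ≠ ∞)
    (hle : ∫⁻ ω, f ω * ENNReal.ofReal (X ω) ∂P ≤ ∫⁻ ω, f ω * ENNReal.ofReal (Z ω) ∂P) :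
    X =ᵐ[P] Z := by
  have hX := hXZ.aemeasurable_fst
  have hZ := hXZ.aemeasurable_snd
  have hZ0 : 0 ≤ᵐ[P] Z := hXZ.ae_mem_snd measurableSet_Ici hX0
  have hmeas : ∀ Y : Ω → ℝ, Measurable fun t => ∫⁻ ω in {ω | t < Y ω}, f ω ∂P := fun Y =>
    Antitone.measurable fun s t hst => lintegral_mono_set fun ω hω => hst.trans_lt hω
  rw [lintegral_mul_ofReal_eq_lintegral_setLIntegral hf hZ hZ0] at hfin hle
  rw [lintegral_mul_ofReal_eq_lintegral_setLIntegral hf hX hX0] at hle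
  have hlayer : ∀ᵐ t ∂volume.restrict (Ioi (0 : ℝ)), {ω | t < X ω} =ᵐ[P] {ω | t < Z ω} ∨
      ∫⁻ ω in {ω | t < Z ω}, f ω ∂P < ∫⁻ ω in {ω | t < X ω}, f ω ∂P := by
    filter_upwards [ae_lt_top (hmeas Z) hfin] with t ht
    refine ae_eq_or_setLIntegral_lt_of_measure_eq (nullMeasurableSet_lt aemeasurable_const hX)
      (nullMeasurableSet_lt aemeasurable_const hZ) (hXZ.measure_mem_eq measurableSet_Ioi)
      (measure_ne_top P _) hf ht.ne ?_
    filter_upwards [hanti] with x hx hxt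
    filter_upwards [hx] with y hy hyt using hy ((not_lt.1 hyt).trans_lt hxt)
  have hlayer_eq := ae_eq_of_ae_le_of_lintegral_le
    (hlayer.mono fun t ht => ht.elim (fun h => (setLIntegral_congr h).ge) le_of_lt)
    hfin (hmeas X).aemeasurable hle
  refine ae_eq_of_ae_superlevel_ae_eq hX0 hZ0 ?_
  filter_upwards [hlayer, hlayer_eq] with t ht ht_eq using ht.resolve_right ht_eq.not_lt

end Superlevel

section Quantile

variable {μ ν : Measure ℝ} {p : ℝ}

lemma bddBelow_setOf_le_cdf (hp : 0 < p) : BddBelow {x | p ≤ cdf μ x} := by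
  obtain ⟨b, hb⟩ := ((tendsto_cdf_atBot μ).eventually (gt_mem_nhds hp)).exists
  exact ⟨b, fun x hx => ((monotone_cdf μ).reflect_lt (hb.trans_le hx)).le⟩

lemma nonempty_setOf_le_cdf (hp : p < 1) : {x | p ≤ cdf μ x}.Nonempty :=
  ((tendsto_cdf_atTop μ).eventually (lt_mem_nhds hp)).exists.imp fun _ => le_of_lt

variable [IsProbabilityMeasure μ] [IsProbabilityMeasure ν]

lemma quantile_le_iff (hp : p ∈ Ioo 0 1) {x : ℝ} : quantile μ p ≤ x ↔ p ≤ cdf μ x := by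
  have hquantile : quantile μ p = sInf {x | p ≤ cdf μ x} := by
    simp only [quantile, cdf_eq_real, measureReal_def]
  rw [hquantile]
  refine ⟨fun hle => ?_, fun hx => csInf_le (bddBelow_setOf_le_cdf hp.1) hx⟩
  have hright : Tendsto (cdf μ) (𝓝[>] x) (𝓝 (cdf μ x)) :=
    ((cdf μ).right_continuous x).mono Ioi_subset_Ici_self
  refine ge_of_tendsto hright ?_
  filter_upwards [self_mem_nhdsWithin] with y hxy
  obtain ⟨z, hz, hzy⟩ := exists_lt_of_csInf_lt (nonempty_setOf_le_cdf hp.2) (hle.trans_lt hxy)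
  exact hz.trans (monotone_cdf μ hzy.le)

lemma monotoneOn_quantile : MonotoneOn (quantile μ) (Ioo 0 1) := fun _p hp _q hq hpq =>
  (quantile_le_iff hp).2 (hpq.trans ((quantile_le_iff hq).1 le_rfl))

lemma cdf_quantile (hν : Continuous (cdf ν)) (hp : p ∈ Ioo 0 1) : cdf ν (quantile ν p) = p := by
  obtain ⟨x, hx⟩ : p ∈ range (cdf ν) := mem_range_of_exists_le_of_exists_ge hν
    ((tendsto_cdf_atBot ν).eventually (ge_mem_nhds hp.1)).exists
    ((tendsto_cdf_atTop ν).eventually (le_mem_nhds hp.2)).exists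
  refine le_antisymm ?_ ((quantile_le_iff hp).1 le_rfl)
  exact (monotone_cdf ν ((quantile_le_iff hp).2 hx.ge)).trans hx.le

/-- The uniform distribution on `(0, 1)`. The interval is open because `quantile` takes junk values
at the endpoints. -/
noncomputable abbrev unitUniform : Measure ℝ := volume.restrict (Ioo 0 1)

instance : IsProbabilityMeasure unitUniform := ⟨by simp⟩

lemma unitUniform_Iic (hp : p ∈ Icc 0 1) : unitUniform (Iic p) = ENNReal.ofReal p := by
  have hae : (Ioo 0 1 : Set ℝ) =ᵐ[volume] Ioc 0 1 := Ioo_ae_eq_Ioc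
  rw [unitUniform, Measure.restrict_congr_set hae, Measure.restrict_apply measurableSet_Iic,
    inter_comm, Ioc_inter_Iic, min_eq_right hp.2, Real.volume_Ioc, sub_zero]

lemma hasLaw_one_sub_unitUniform : HasLaw (fun p => 1 - p) unitUniform unitUniform := by
  have hpreimage : (fun p : ℝ => 1 - p) ⁻¹' Ioo 0 1 = Ioo 0 1 := by simp
  have hpreserving := (Measure.measurePreserving_sub_left (volume : Measure ℝ) 1).restrict_preimage
    (measurableSet_Ioo (a := 0) (b := 1))
  rw [hpreimage] at hpreserving
  exact hpreserving.hasLaw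

lemma hasLaw_quantile : HasLaw (quantile μ) μ unitUniform := by
  have hmeas : AEMeasurable (quantile μ) unitUniform :=
    aemeasurable_restrict_of_monotoneOn measurableSet_Ioo monotoneOn_quantile
  refine ⟨hmeas, Measure.ext_of_Iic _ _ fun x => ?_⟩
  have hpreimage : quantile μ ⁻¹' Iic x =ᵐ[unitUniform] Iic (cdf μ x) := by
    filter_upwards [ae_restrict_mem measurableSet_Ioo] with p hp using propext (quantile_le_iff hp)
  rw [Measure.map_apply_of_aemeasurable hmeas measurableSet_Iic, measure_congr hpreimage,
    unitUniform_Iic ⟨cdf_nonneg μ x, cdf_le_one μ x⟩, ofReal_cdf]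

lemma hasLaw_cdf (hν : Continuous (cdf ν)) : HasLaw (cdf ν) unitUniform ν := by
  have hcomp : HasLaw (fun p => cdf ν (quantile ν p)) unitUniform unitUniform :=
    HasLaw.id.congr <| (ae_restrict_mem measurableSet_Ioo).mono fun p hp => cdf_quantile hν hp
  exact hasLaw_quantile.comp_of_hasLaw_comp hν.aemeasurable HasLaw.id hcomp

end Quantile

section Payoff

/-- The cheapest payoff with law `μ` when the pricing kernel `η` has law `ν`, as a function of the
value of `η`: it pairs the largest values of the payoff with the smallest values of `η`. -/
noncomputable def costEfficientPayoff (ν μ : Measure ℝ) (x : ℝ) : ℝ := quantile μ (1 - cdf ν x)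

variable {μ ν : Measure ℝ} [IsProbabilityMeasure μ]

lemma antitoneOn_costEfficientPayoff :
    AntitoneOn (costEfficientPayoff ν μ) (cdf ν ⁻¹' Ioo 0 1) := fun _x hx _y hy hxy =>
  monotoneOn_quantile (Ioo.one_sub_mem hy) (Ioo.one_sub_mem hx)
    (sub_le_sub_left (monotone_cdf ν hxy) 1)

variable [IsProbabilityMeasure ν]

lemma hasLaw_costEfficientPayoff (hν : Continuous (cdf ν)) :
    HasLaw (costEfficientPayoff ν μ) μ ν :=
  hasLaw_quantile.comp (hasLaw_one_sub_unitUniform.comp (hasLaw_cdf hν))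

lemma lintegral_mul_costEfficientPayoff {Ω : Type*} [MeasurableSpace Ω] {P : Measure Ω}
    {η : Ω → ℝ} (hη : HasLaw η ν P) (hν : Continuous (cdf ν)) :
    ∫⁻ ω, ENNReal.ofReal (η ω * costEfficientPayoff ν μ (η ω)) ∂P =
      ∫⁻ p in Ioo 0 1, ENNReal.ofReal (quantile ν (1 - p) * quantile μ p) := by
  have hlaw : HasLaw (fun p => quantile ν (1 - p)) ν unitUniform :=
    hasLaw_quantile.comp hasLaw_one_sub_unitUniform
  have hmeas : AEMeasurable (fun x => ENNReal.ofReal (x * costEfficientPayoff ν μ x)) ν :=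
    (aemeasurable_id.mul (hasLaw_costEfficientPayoff hν).aemeasurable).ennreal_ofReal
  calc ∫⁻ ω, ENNReal.ofReal (η ω * costEfficientPayoff ν μ (η ω)) ∂P
      = ∫⁻ x, ENNReal.ofReal (x * costEfficientPayoff ν μ x) ∂ν := hη.lintegral_comp hmeas
    _ = ∫⁻ p in Ioo 0 1, ENNReal.ofReal
          (quantile ν (1 - p) * costEfficientPayoff ν μ (quantile ν (1 - p))) :=
        (hlaw.lintegral_comp hmeas).symm
    _ = ∫⁻ p in Ioo 0 1, ENNReal.ofReal (quantile ν (1 - p) * quantile μ p) := by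
        refine setLIntegral_congr_fun measurableSet_Ioo fun p hp => ?_
        simp only [costEfficientPayoff, cdf_quantile hν (Ioo.one_sub_mem hp), sub_sub_cancel]

end Payoff

theorem cost_efficient_unique_general {Ω : Type*} [MeasurableSpace Ω] {P : Measure Ω}
    [IsProbabilityMeasure P] {η X : Ω → ℝ} {ν μ : Measure ℝ} (hη : HasLaw η ν P)
    (hX : HasLaw X μ P) (hη0 : 0 ≤ᵐ[P] η) (hX0 : 0 ≤ᵐ[P] X) (hν : Continuous (cdf ν))
    (hfin : ∫⁻ p in Ioo (0 : ℝ) 1, ENNReal.ofReal (quantile ν (1 - p) * quantile μ p) < ∞)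
    (hcost : ∫⁻ ω, ENNReal.ofReal (η ω * X ω) ∂P ≤
      ∫⁻ p in Ioo (0 : ℝ) 1, ENNReal.ofReal (quantile ν (1 - p) * quantile μ p)) :
    ∀ᵐ ω ∂P, X ω = quantile μ (1 - cdf ν (η ω)) := by
  have : IsProbabilityMeasure ν := hη.isProbabilityMeasure_iff.1 inferInstance
  have : IsProbabilityMeasure μ := hX.isProbabilityMeasure_iff.1 inferInstance
  have hZ : HasLaw (fun ω => costEfficientPayoff ν μ (η ω)) μ P :=
    (hasLaw_costEfficientPayoff hν).comp hη
  have hofReal_mul : ∀ Y : Ω → ℝ, ∫⁻ ω, ENNReal.ofReal (η ω * Y ω) ∂P =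
      ∫⁻ ω, ENNReal.ofReal (η ω) * ENNReal.ofReal (Y ω) ∂P := fun Y =>
    lintegral_congr_ae (hη0.mono fun ω hω => ENNReal.ofReal_mul hω)
  rw [← lintegral_mul_costEfficientPayoff hη hν, hofReal_mul] at hfin hcost
  rw [hofReal_mul] at hcost
  have hcdf : ∀ᵐ ω ∂P, cdf ν (η ω) ∈ Ioo 0 1 :=
    (((hasLaw_cdf hν).comp hη).ae_iff measurableSet_Ioo.mem).2 (ae_restrict_mem measurableSet_Ioo)
  refine ae_eq_of_identDistrib_of_lintegral_mul_le hη.aemeasurable.ennreal_ofReal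
    (hX.identDistrib hZ) hX0 ?_ hfin.ne hcost
  filter_upwards [hη0, hcdf] with x hx0 hx
  filter_upwards [hcdf] with y hy hlt
  have hxy : η x < η y :=
    not_le.1 fun hyx => (antitoneOn_costEfficientPayoff hy hx hyx).not_gt hlt
  exact (ENNReal.ofReal_lt_ofReal_iff (hx0.trans_lt hxy)).2 hxy

/-- Uniqueness of the cost-efficient payoff: if `η ≥ 0` is atomless and integrable, `μ` is a
Borel probability measure on `[0, ∞)` with finite first moment, the Hardy–Littlewood bound
`c := ∫₀¹ q_η(1-p) q_μ(p) dp` is finite, and a nonnegative `X` with law `μ` satisfies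
`E[η X] = c`, then `X = q_μ(1 - F_η(η))` almost surely. -/
theorem cost_efficient_unique {Ω : Type*} [MeasurableSpace Ω]
    (P : Measure Ω) [IsProbabilityMeasure P]
    (η : Ω → ℝ) (hη : Measurable η) (hη0 : ∀ ω, 0 ≤ η ω)
    (hηint : Integrable η P)
    (hatomless : Continuous fun x => ((P.map η) (Iic x)).toReal)
    (μ : Measure ℝ) [IsProbabilityMeasure μ] (hμ : μ (Iio 0) = 0)
    (hmoment : ∫⁻ x, ENNReal.ofReal x ∂μ < ⊤)
    (hfin : ∫⁻ p in Ioo (0:ℝ) 1,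
        ENNReal.ofReal (quantile (P.map η) (1 - p) * quantile μ p) < ⊤)
    (X : Ω → ℝ) (hX : Measurable X) (hX0 : ∀ ω, 0 ≤ X ω) (hlaw : P.map X = μ)
    (hcost : ∫⁻ ω, ENNReal.ofReal (η ω * X ω) ∂P
        = ∫⁻ p in Ioo (0:ℝ) 1,
            ENNReal.ofReal (quantile (P.map η) (1 - p) * quantile μ p)) :
    ∀ᵐ ω ∂P, X ω = quantile μ (1 - ((P.map η) (Iic (η ω))).toReal) := by
  have hη_law : HasLaw η (P.map η) P := ⟨hη.aemeasurable, rfl⟩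
  have : IsProbabilityMeasure (P.map η) := Measure.isProbabilityMeasure_map hη.aemeasurable
  simp only [← measureReal_def, ← cdf_eq_real] at hatomless ⊢
  exact cost_efficient_unique_general hη_law ⟨hX.aemeasurable, hlaw⟩ (ae_of_all P hη0)
    (ae_of_all P hX0) hatomless hfin hcost.le
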